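/- arXiv:1706.10172 — 5 statements merged into one kernel-verified Lean document; each statement's English description precedes it below -/
import Mathlib

section
/- Let C be an s–t cut of the augmented graph G', and define the labelling f_C : V → {0,1} by f_C(u) = 0 if there is a directed path from s to u using only edges of E' \ C, and f_C(u) = 1 otherwise. Then C(f_C) ⊆ C; consequently, for any nonnegative cost function c on E', the cost of C(f_C) is at most the cost of C. -/
/-!
`C(f_C)` consists of edges of `G'` that leave the set of nodes reachable from `s` in `E' \ C`.
An edge of `E'` whose tail is reachable and whose head is not must lie in `C`, since otherwise it
would extend a path to its head. The node `s` is trivially reachable and `t` is not because `C`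
is a cut, so this covers all three kinds of edges in `C(f_C)`. The cost inequality is then
monotonicity of sums of nonnegative terms.
-/

open Finset

variable {α : Type*}

/-- Edge set `E'` of the augmented graph `G'`: the social links `E` together with the
labelling links `(s,u)` and `(u,t)` for each user node `u ∈ V`. -/
def augEdges [DecidableEq α] (V : Finset α) (s t : α) (E : Finset (α × α)) :
    Finset (α × α) :=
  E ∪ V.image (fun u => (s, u)) ∪ V.image (fun u => (u, t))

/-- `Reaches A x y` : there is a directed path from `x` to `y` using only edges in `A`. -/
def Reaches (A : Finset (α × α)) (x y : α) : Prop :=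
  Relation.ReflTransGen (fun a b => (a, b) ∈ A) x y

/-- `C` is an s–t cut of the augmented graph: `C ⊆ E'` and there is no directed path
from `s` to `t` using only edges of `E' \ C`. -/
def IsCut [DecidableEq α] (V : Finset α) (s t : α) (E C : Finset (α × α)) : Prop :=
  C ⊆ augEdges V s t E ∧ ¬ Reaches (augEdges V s t E \ C) s t

/-- The edge set `C(f)` associated to a labelling `f : V → {0,1}`. -/
def cutOf [DecidableEq α] (V : Finset α) (s t : α) (E : Finset (α × α))
    (f : α → Fin 2) : Finset (α × α) :=
  (V.filter fun u => f u = 0).image (fun u => (u, t)) ∪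
    (V.filter fun u => f u = 1).image (fun u => (s, u)) ∪
    E.filter (fun e => f e.1 = 0 ∧ f e.2 = 1)

open Classical in
/-- The labelling `f_C` induced by a cut `C`: a user gets label `0` iff it is reachable
from `s` using only edges of `E' \ C`, and label `1` otherwise. -/
noncomputable def reachLabel [DecidableEq α] (V : Finset α) (s t : α)
    (E C : Finset (α × α)) (u : α) : Fin 2 :=
  if Reaches (augEdges V s t E \ C) s u then 0 else 1

theorem mem_cut_of_reaches_of_not_reaches [DecidableEq α] {A C : Finset (α × α)} {s x y : α}
    (h : (x, y) ∈ A) (hx : Reaches (A \ C) s x) (hy : ¬ Reaches (A \ C) s y) :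
    (x, y) ∈ C := by
  by_contra hn
  exact hy (Relation.ReflTransGen.tail hx (Finset.mem_sdiff.2 ⟨h, hn⟩))

/-- For any s–t cut `C`, the cut `C(f_C)` induced by the reachability labelling `f_C`
satisfies `C(f_C) ⊆ C`; consequently, for any nonnegative cost function on `E'`,
the cost of `C(f_C)` is at most the cost of `C`. -/
theorem cutOf_reachLabel_subset_and_cost_le
    [DecidableEq α] (V : Finset α) (s t : α) (E : Finset (α × α))
    (hs : s ∉ V) (ht : t ∉ V) (hst : s ≠ t)
    (hE : ∀ e ∈ E, e.1 ∈ V ∧ e.2 ∈ V)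
    (C : Finset (α × α)) (hC : IsCut V s t E C)
    (c : α × α → ℝ) (hc : ∀ e ∈ augEdges V s t E, 0 ≤ c e) :
    cutOf V s t E (reachLabel V s t E C) ⊆ C ∧
      ∑ e ∈ cutOf V s t E (reachLabel V s t E C), c e ≤ ∑ e ∈ C, c e := by
  have h_sub : cutOf V s t E (reachLabel V s t E C) ⊆ C := by
    have h_zero : ∀ u, reachLabel V s t E C u = 0 → Reaches (augEdges V s t E \ C) s u := by
      intro u hu
      by_contra hn
      simp [reachLabel, hn] at hu
    have h_one : ∀ u, reachLabel V s t E C u = 1 → ¬ Reaches (augEdges V s t E \ C) s u := by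
      intro u hu hr
      simp [reachLabel, hr] at hu
    intro e he
    simp only [cutOf, mem_union, mem_image, mem_filter] at he
    rcases he with (⟨u, ⟨hu, hf⟩, rfl⟩ | ⟨u, ⟨hu, hf⟩, rfl⟩) | ⟨he, hf₁, hf₂⟩
    · have h_mem : (u, t) ∈ augEdges V s t E := by simp [augEdges, hu]
      exact mem_cut_of_reaches_of_not_reaches h_mem (h_zero u hf) hC.2
    · have h_mem : (s, u) ∈ augEdges V s t E := by simp [augEdges, hu]
      exact mem_cut_of_reaches_of_not_reaches h_mem Relation.ReflTransGen.refl (h_one u hf)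
    · have h_mem : (e.1, e.2) ∈ augEdges V s t E := by simp [augEdges, he]
      exact mem_cut_of_reaches_of_not_reaches h_mem (h_zero _ hf₁) (h_one _ hf₂)
  exact ⟨h_sub, sum_le_sum_of_subset_of_nonneg h_sub fun e he _ => hc e (hC.1 he)⟩
end

section
/- For any nonnegative cost function c on E', the minimum cost of an s–t cut of the augmented graph G' equals the minimum over all labellings f : V → {0,1} of the energy E(f); that is, min_{C an s–t cut} Σ_{e∈C} c(e) = min_{f : V → {0,1}} E(f). In particular, solving the minimum cut problem on G' solves the energy minimisation problem and vice versa. -/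
/-!
A labelling `f` corresponds to the partition of the nodes into a source side (label `0`, together
with `s`) and a sink side (label `1`, together with `t`). The edges going from the source side to
the sink side form an s–t cut, `labelCut`, whose cost is exactly the energy of `f`
(`sum_labelCut`, `isCut_labelCut`). Conversely, given a cut `C`, label `0` the nodes that are still
reachable from `s` after removing `C`. Every edge from a reachable node to an unreachable one must
have been removed, so the cut of this labelling is contained in `C` (`exists_labelCut_subset`),
and by nonnegativity of `c` its cost is at most that of `C`. Hence every energy is the cost of
some cut, every cut costs at least some energy, and the infima agree.
-/

open Finset

variable {α : Type*}

/-- The energy `E(f)` of a labelling `f : V → {0,1}`. -/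
def energy [DecidableEq α] (V : Finset α) (s t : α) (E : Finset (α × α))
    (c : α × α → ℝ) (f : α → Fin 2) : ℝ :=
  (∑ u ∈ V.filter fun u => f u = 0, c (u, t)) +
    (∑ u ∈ V.filter fun u => f u = 1, c (s, u)) +
    ∑ e ∈ E.filter (fun e => f e.1 = 0 ∧ f e.2 = 1), c e

/-- The labelling `f` extended to the terminals: `s` gets label `0` and `t` gets label `1`.
The values of `f` at `s` and `t`, if any, are overridden. -/
def extLabel [DecidableEq α] (s t : α) (f : α → Fin 2) : α → Fin 2 :=
  Function.update (Function.update f s 0) t 1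

/-- The cut induced by a labelling: all edges of `E'` from a node labelled `0` to a node
labelled `1`. -/
def labelCut [DecidableEq α] (V : Finset α) (s t : α) (E : Finset (α × α)) (f : α → Fin 2) :
    Finset (α × α) :=
  (augEdges V s t E).filter fun e => extLabel s t f e.1 = 0 ∧ extLabel s t f e.2 = 1

lemma extLabel_source [DecidableEq α] {s t : α} (hst : s ≠ t) (f : α → Fin 2) :
    extLabel s t f s = 0 := by
  simp [extLabel, hst]

lemma extLabel_sink [DecidableEq α] (s t : α) (f : α → Fin 2) :
    extLabel s t f t = 1 := by
  simp [extLabel]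

lemma extLabel_of_ne [DecidableEq α] {s t u : α} (hs : u ≠ s) (ht : u ≠ t) (f : α → Fin 2) :
    extLabel s t f u = f u := by
  simp [extLabel, hs, ht]

/-- Since `s, t ∉ V`, the social links and the two families of labelling links are pairwise
disjoint, so a sum over `E'` splits. -/
lemma sum_augEdges [DecidableEq α] {V : Finset α} {s t : α} {E : Finset (α × α)}
    (hs : s ∉ V) (ht : t ∉ V) (hE : ∀ e ∈ E, e.1 ∈ V ∧ e.2 ∈ V) (F : α × α → ℝ) :
    ∑ e ∈ augEdges V s t E, F e =
      ∑ e ∈ E, F e + ∑ u ∈ V, F (s, u) + ∑ u ∈ V, F (u, t) := by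
  unfold augEdges
  rw [sum_union, sum_union, sum_image, sum_image]
  · intro a _ b _ h
    exact congrArg Prod.fst h
  · intro a _ b _ h
    exact congrArg Prod.snd h
  · rw [disjoint_left]
    intro e he h
    obtain ⟨u, _, rfl⟩ := mem_image.1 h
    exact hs (hE _ he).1
  · rw [disjoint_left]
    intro e he h
    obtain ⟨u, hu, rfl⟩ := mem_image.1 h
    rcases mem_union.1 he with he | he
    · exact ht (hE _ he).2
    · obtain ⟨v, _, hv⟩ := mem_image.1 he
      have hsu : s = u := congrArg Prod.fst hv
      exact hs (hsu ▸ hu)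

lemma sum_labelCut [DecidableEq α] {V : Finset α} {s t : α} {E : Finset (α × α)}
    (hs : s ∉ V) (ht : t ∉ V) (hst : s ≠ t) (hE : ∀ e ∈ E, e.1 ∈ V ∧ e.2 ∈ V)
    (c : α × α → ℝ) (f : α → Fin 2) :
    ∑ e ∈ labelCut V s t E f, c e = energy V s t E c f := by
  have hV : ∀ u ∈ V, extLabel s t f u = f u := fun u hu =>
    extLabel_of_ne (ne_of_mem_of_not_mem hu hs) (ne_of_mem_of_not_mem hu ht) f
  have h1 : ∑ e ∈ E, (if extLabel s t f e.1 = 0 ∧ extLabel s t f e.2 = 1 then c e else 0) =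
      ∑ e ∈ E, if f e.1 = 0 ∧ f e.2 = 1 then c e else 0 :=
    sum_congr rfl fun e he => by rw [hV _ (hE e he).1, hV _ (hE e he).2]
  have h2 : ∑ u ∈ V, (if extLabel s t f s = 0 ∧ extLabel s t f u = 1 then c (s, u) else 0) =
      ∑ u ∈ V, if f u = 1 then c (s, u) else 0 :=
    sum_congr rfl fun u hu => by simp [hV u hu, extLabel_source hst]
  have h3 : ∑ u ∈ V, (if extLabel s t f u = 0 ∧ extLabel s t f t = 1 then c (u, t) else 0) =
      ∑ u ∈ V, if f u = 0 then c (u, t) else 0 :=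
    sum_congr rfl fun u hu => by simp [hV u hu, extLabel_sink]
  rw [labelCut, sum_filter, sum_augEdges hs ht hE, h1, h2, h3, energy, sum_filter, sum_filter,
    sum_filter]
  ring

lemma isCut_labelCut [DecidableEq α] (V : Finset α) {s t : α} (E : Finset (α × α))
    (hst : s ≠ t) (f : α → Fin 2) : IsCut V s t E (labelCut V s t E f) := by
  refine ⟨filter_subset _ _, fun h => ?_⟩
  -- Label `0` propagates along every edge outside the cut, starting from `s`.
  have key : ∀ x, Reaches (augEdges V s t E \ labelCut V s t E f) s x →
      extLabel s t f x = 0 := by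
    intro x hx
    induction hx with
    | refl => exact extLabel_source hst f
    | @tail a b _ hab ih =>
      obtain ⟨hA, hC⟩ := mem_sdiff.1 hab
      have hb : extLabel s t f b ≠ 1 := fun hb => hC (mem_filter.2 ⟨hA, ih, hb⟩)
      omega
  have h0 := key t h
  rw [extLabel_sink] at h0
  exact absurd h0 (by decide)

lemma exists_labelCut_subset [DecidableEq α] {V : Finset α} {s t : α} {E C : Finset (α × α)}
    (hC : IsCut V s t E C) : ∃ f : α → Fin 2, labelCut V s t E f ⊆ C := by
  classical
  let R : α → Prop := Reaches (augEdges V s t E \ C) s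
  let f : α → Fin 2 := fun u => if R u then 0 else 1
  have hRs : R s := Relation.ReflTransGen.refl
  have hRt : ¬ R t := hC.2
  -- `s` is reachable and `t` is not, so extending `f` to the terminals changes nothing.
  have hf : extLabel s t f = f := by
    have h1 : Function.update f s 0 = f := Function.update_eq_self_iff.2 (by simp [f, hRs])
    rw [extLabel, h1]
    exact Function.update_eq_self_iff.2 (by simp [f, hRt])
  refine ⟨f, fun e he => ?_⟩
  obtain ⟨hA, h0, h1⟩ := mem_filter.1 he
  rw [hf] at h0 h1
  have ha : R e.1 := by
    by_contra h
    simp [f, h] at h0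
  by_contra heC
  have hb : R e.2 := Relation.ReflTransGen.tail ha (mem_sdiff.2 ⟨hA, heC⟩)
  simp [f, hb] at h1

/-- The minimum cost of an s–t cut of the augmented graph equals the minimum energy over
all labellings `f : V → {0,1}`: the minimum cut problem and the energy minimisation
problem have the same optimum value. -/
theorem minCut_cost_eq_min_energy
    [DecidableEq α] (V : Finset α) (s t : α) (E : Finset (α × α))
    (hs : s ∉ V) (ht : t ∉ V) (hst : s ≠ t)
    (hE : ∀ e ∈ E, e.1 ∈ V ∧ e.2 ∈ V)
    (c : α × α → ℝ) (hc : ∀ e ∈ augEdges V s t E, 0 ≤ c e) :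
    sInf {x : ℝ | ∃ C, IsCut V s t E C ∧ x = ∑ e ∈ C, c e} =
      sInf {x : ℝ | ∃ f : α → Fin 2, x = energy V s t E c f} := by
  have hnonneg : ∀ C ⊆ augEdges V s t E, 0 ≤ ∑ e ∈ C, c e := fun C hC =>
    sum_nonneg fun e he => hc e (hC he)
  apply le_antisymm
  · refine le_csInf ⟨_, fun _ => 0, rfl⟩ ?_
    rintro x ⟨f, rfl⟩
    refine csInf_le ⟨0, ?_⟩
      ⟨labelCut V s t E f, isCut_labelCut V E hst f, (sum_labelCut hs ht hst hE c f).symm⟩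
    rintro y ⟨C, hC, rfl⟩
    exact hnonneg C hC.1
  · refine le_csInf ⟨_, _, isCut_labelCut V E hst fun _ => 0, rfl⟩ ?_
    rintro x ⟨C, hC, rfl⟩
    obtain ⟨f, hf⟩ := exists_labelCut_subset hC
    refine csInf_le_of_le ⟨0, ?_⟩ ⟨f, rfl⟩ ?_
    · rintro y ⟨g, rfl⟩
      rw [← sum_labelCut hs ht hst hE c g]
      exact hnonneg _ (isCut_labelCut V E hst g).1
    · rw [← sum_labelCut hs ht hst hE c f]
      exact sum_le_sum_of_subset_of_nonneg hf fun e he _ => hc e (hC.1 he)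
end

section
/- If C is an inclusion-minimal s–t cut of the augmented graph G' (no proper subset of C is an s–t cut), then C = C(f_C), where f_C : V → {0,1} is the labelling defined by f_C(u) = 0 if there is a directed path from s to u using only edges of E' \ C, and f_C(u) = 1 otherwise. In other words, every inclusion-minimal s–t cut of G' arises from a labelling of the user nodes. -/
/-!
Let `S` be the set of nodes reachable from `s` in `E' \ C`, so that `s ∈ S` and, `C` being a cut,
`t ∉ S`. Then `C(f_C)` is exactly the set of edges of `E'` that leave `S`
(`mem_cutOf_reachLabel_iff`). Each such edge lies in `C`, since otherwise its head would be
reachable too. On the other hand, removing all edges that leave `S` already separates `s` from `t`,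
so `C(f_C)` is an s–t cut contained in `C`, and minimality of `C` forces equality.
-/

open Finset

variable {α : Type*}

theorem reachLabel_eq_zero_iff [DecidableEq α] {V : Finset α} {s t : α} {E C : Finset (α × α)}
    {u : α} : reachLabel V s t E C u = 0 ↔ Reaches (augEdges V s t E \ C) s u := by
  unfold reachLabel
  split_ifs with h <;> simp [h]

theorem reachLabel_eq_one_iff [DecidableEq α] {V : Finset α} {s t : α} {E C : Finset (α × α)}
    {u : α} : reachLabel V s t E C u = 1 ↔ ¬ Reaches (augEdges V s t E \ C) s u := by
  unfold reachLabel
  split_ifs with h <;> simp [h]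

/-- `C(f_C)` is the set of edges of the augmented graph that leave the set of nodes reachable
from `s` in `E' \ C`. -/
theorem mem_cutOf_reachLabel_iff [DecidableEq α] {V : Finset α} {s t : α}
    {E C : Finset (α × α)} (hC : IsCut V s t E C) (a b : α) :
    (a, b) ∈ cutOf V s t E (reachLabel V s t E C) ↔
      (a, b) ∈ augEdges V s t E ∧ Reaches (augEdges V s t E \ C) s a ∧
        ¬ Reaches (augEdges V s t E \ C) s b := by
  have hs : Reaches (augEdges V s t E \ C) s s := Relation.ReflTransGen.refl
  have ht := hC.2
  -- Only `P s` and `¬ P t` matter for the set `P` of reachable nodes; keeping `P` abstract lets the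
  -- equations between pairs be eliminated by `cases`.
  have key : ∀ P : α → Prop, P s → ¬ P t →
      ((((∃ u, (u ∈ V ∧ P u) ∧ (u, t) = (a, b)) ∨ (∃ u, (u ∈ V ∧ ¬ P u) ∧ (s, u) = (a, b))) ∨
        ((a, b) ∈ E ∧ P a ∧ ¬ P b)) ↔
      (((a, b) ∈ E ∨ ∃ u ∈ V, (s, u) = (a, b)) ∨ ∃ u ∈ V, (u, t) = (a, b)) ∧ P a ∧ ¬ P b) := by
    intro P hs ht
    constructor
    · rintro ((⟨u, ⟨hu, hP⟩, h⟩ | ⟨u, ⟨hu, hP⟩, h⟩) | ⟨h, ha, hb⟩)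
      · cases h
        exact ⟨Or.inr ⟨_, hu, rfl⟩, hP, ht⟩
      · cases h
        exact ⟨Or.inl (Or.inr ⟨_, hu, rfl⟩), hs, hP⟩
      · exact ⟨Or.inl (Or.inl h), ha, hb⟩
    · rintro ⟨(h | ⟨u, hu, h⟩) | ⟨u, hu, h⟩, ha, hb⟩
      · exact Or.inr ⟨h, ha, hb⟩
      · cases h
        exact Or.inl (Or.inr ⟨_, ⟨hu, hb⟩, rfl⟩)
      · cases h
        exact Or.inl (Or.inl ⟨_, ⟨hu, ha⟩, rfl⟩)
  have := key _ hs ht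
  simpa only [cutOf, mem_union, mem_image, mem_filter, reachLabel_eq_zero_iff,
    reachLabel_eq_one_iff, augEdges] using this

theorem cutOf_reachLabel_subset [DecidableEq α] {V : Finset α} {s t : α}
    {E C : Finset (α × α)} (hC : IsCut V s t E C) :
    cutOf V s t E (reachLabel V s t E C) ⊆ C := by
  rintro ⟨a, b⟩ h
  obtain ⟨hab, ha, hb⟩ := (mem_cutOf_reachLabel_iff hC a b).1 h
  by_contra hn
  exact hb (Relation.ReflTransGen.tail ha (mem_sdiff.2 ⟨hab, hn⟩))

theorem isCut_cutOf_reachLabel [DecidableEq α] {V : Finset α} {s t : α}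
    {E C : Finset (α × α)} (hC : IsCut V s t E C) :
    IsCut V s t E (cutOf V s t E (reachLabel V s t E C)) := by
  refine ⟨(cutOf_reachLabel_subset hC).trans hC.1, fun hr => hC.2 ?_⟩
  -- Without the edges leaving it, the set reachable in `E' \ C` is closed under outgoing edges.
  have closed : ∀ x, Reaches (augEdges V s t E \ cutOf V s t E (reachLabel V s t E C)) s x →
      Reaches (augEdges V s t E \ C) s x := by
    intro x hx
    unfold Reaches at hx
    induction hx with
    | refl => exact Relation.ReflTransGen.refl
    | tail _ hbc ih =>
      obtain ⟨hbc, hn⟩ := mem_sdiff.1 hbc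
      by_contra hc
      exact hn ((mem_cutOf_reachLabel_iff hC _ _).2 ⟨hbc, ih, hc⟩)
  exact closed t hr

/-- Every inclusion-minimal s–t cut `C` of the augmented graph arises from a labelling:
`C = C(f_C)`, where `f_C` labels a user `0` iff it is reachable from `s` in `E' \ C`. -/
theorem inclusion_minimal_cut_eq_cutOf_reachLabel
    [DecidableEq α] (V : Finset α) (s t : α) (E : Finset (α × α))
    (hs : s ∉ V) (ht : t ∉ V) (hst : s ≠ t)
    (hE : ∀ e ∈ E, e.1 ∈ V ∧ e.2 ∈ V)
    (C : Finset (α × α)) (hC : IsCut V s t E C)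
    (hmin : ∀ C' ⊂ C, ¬ IsCut V s t E C') :
    C = cutOf V s t E (reachLabel V s t E C) := by
  by_contra hne
  exact hmin _ ((cutOf_reachLabel_subset hC).ssubset_of_ne (Ne.symm hne))
    (isCut_cutOf_reachLabel hC)
end

section
/- (Degeneration at large λ.) Suppose V is finite and nonempty, E is symmetric (i.e. (u,v) ∈ E implies (v,u) ∈ E), c(u,v) > 0 for every (u,v) ∈ E, and the undirected graph on V with an edge {u,v} whenever (u,v) ∈ E is connected. For λ ≥ 0 define the energy E_λ(f) := Σ_{u : f(u)=0} c(u,t) + Σ_{u : f(u)=1} c(s,u) + λ · Σ_{(u,v)∈E, f(u)=0, f(v)=1} c(u,v). Then there exists λ₀ ≥ 0 such that for every λ > λ₀, every labelling f : V → {0,1} minimizing E_λ is constant (all nodes receive the same label). -/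
/-!
The labelling that is constantly `0` has energy `K = ∑ u ∈ V, c (u, t)`, whatever `λ` is. A labelling
that cuts a social link `e` (value `0` at its tail, `1` at its head) has energy at least `λ * c e`,
so for `λ > ∑ e ∈ E, K / c e` it is not a minimizer. As `E` is symmetric, a minimizer
then takes the same value at both ends of every link, and connectedness makes it constant on `V`.
-/

open Finset

variable {α : Type*}

/-- The energy `E_λ(f)` with smoothness-term weight `λ`. -/
def energyLam [DecidableEq α] (V : Finset α) (s t : α) (E : Finset (α × α))
    (c : α × α → ℝ) (lam : ℝ) (f : α → Fin 2) : ℝ :=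
  (∑ u ∈ V.filter fun u => f u = 0, c (u, t)) +
    (∑ u ∈ V.filter fun u => f u = 1, c (s, u)) +
    lam * ∑ e ∈ E.filter (fun e => f e.1 = 0 ∧ f e.2 = 1), c e

theorem energyLam_zero [DecidableEq α] (V : Finset α) (s t : α) (E : Finset (α × α))
    (c : α × α → ℝ) (lam : ℝ) :
    energyLam V s t E c lam (fun _ => 0) = ∑ u ∈ V, c (u, t) := by
  simp [energyLam]

theorem le_energyLam_of_cut [DecidableEq α] {V : Finset α} {s t : α} {E : Finset (α × α)}
    {c : α × α → ℝ} (hc : ∀ e ∈ augEdges V s t E, 0 ≤ c e) {lam : ℝ} (hlam : 0 ≤ lam)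
    {f : α → Fin 2} {e : α × α} (he : e ∈ E) (h0 : f e.1 = 0) (h1 : f e.2 = 1) :
    lam * c e ≤ energyLam V s t E c lam f := by
  have ht : 0 ≤ ∑ u ∈ V.filter fun u => f u = 0, c (u, t) :=
    Finset.sum_nonneg fun u hu => hc _ (by
      have := (Finset.mem_filter.mp hu).1
      simp [augEdges, this])
  have hs : 0 ≤ ∑ u ∈ V.filter fun u => f u = 1, c (s, u) :=
    Finset.sum_nonneg fun u hu => hc _ (by
      have := (Finset.mem_filter.mp hu).1
      simp [augEdges, this])
  have hcut : c e ≤ ∑ e ∈ E.filter (fun e => f e.1 = 0 ∧ f e.2 = 1), c e :=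
    Finset.single_le_sum (f := c)
      (fun x hx => hc x (by
        have := (Finset.mem_filter.mp hx).1
        simp [augEdges, this]))
      (Finset.mem_filter.mpr ⟨he, h0, h1⟩)
  have := mul_le_mul_of_nonneg_left hcut hlam
  unfold energyLam
  linarith

/-- Degeneration at large `λ`: if the social network is symmetric, connected on the
nonempty user set `V`, and has strictly positive social-link costs, then for all
sufficiently large `λ` every labelling minimizing `E_λ` is constant on `V`. -/
theorem energy_min_constant_for_large_lambda
    [DecidableEq α] (V : Finset α) (s t : α) (E : Finset (α × α))
    (hs : s ∉ V) (ht : t ∉ V) (hst : s ≠ t)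
    (hE : ∀ e ∈ E, e.1 ∈ V ∧ e.2 ∈ V)
    (hne : V.Nonempty)
    (hsym : ∀ e ∈ E, (e.2, e.1) ∈ E)
    (c : α × α → ℝ) (hc : ∀ e ∈ augEdges V s t E, 0 ≤ c e)
    (hpos : ∀ e ∈ E, 0 < c e)
    (hconn : ∀ u ∈ V, ∀ v ∈ V, Relation.ReflTransGen (fun a b => (a, b) ∈ E) u v) :
    ∃ lam₀ : ℝ, 0 ≤ lam₀ ∧ ∀ lam > lam₀, ∀ f : α → Fin 2,
      (∀ g : α → Fin 2, energyLam V s t E c lam f ≤ energyLam V s t E c lam g) →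
      ∀ u ∈ V, ∀ v ∈ V, f u = f v := by
  have hK : 0 ≤ ∑ u ∈ V, c (u, t) :=
    Finset.sum_nonneg fun u hu => hc _ (by simp [augEdges, hu])
  have hterm : ∀ e ∈ E, 0 ≤ (∑ u ∈ V, c (u, t)) / c e :=
    fun e he => div_nonneg hK (hpos e he).le
  have hlam₀ : 0 ≤ ∑ e ∈ E, (∑ u ∈ V, c (u, t)) / c e := Finset.sum_nonneg hterm
  refine ⟨∑ e ∈ E, (∑ u ∈ V, c (u, t)) / c e, hlam₀, fun lam hlam f hf u hu v hv => ?_⟩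
  have hnocut : ∀ e ∈ E, ¬ (f e.1 = 0 ∧ f e.2 = 1) := by
    rintro e he ⟨h0, h1⟩
    have hle := le_energyLam_of_cut hc (hlam₀.trans hlam.le) he h0 h1
    have hmin := hf fun _ => 0
    rw [energyLam_zero] at hmin
    have hlt : (∑ u ∈ V, c (u, t)) / c e < lam :=
      (Finset.single_le_sum hterm he).trans_lt hlam
    rw [div_lt_iff₀ (hpos e he)] at hlt
    linarith
  have hstep : ∀ a b, (a, b) ∈ E → f a = f b := by
    intro a b hab
    have h1 := hnocut _ hab
    have h2 := hnocut _ (hsym _ hab)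
    dsimp only at h1 h2
    omega
  induction hconn u hu v hv with
  | refl => rfl
  | tail _ hab ih => exact (ih (hE _ hab).1).trans (hstep _ _ hab)
end

section
/- (Two-user gadget case analysis, Figure 3 of the paper.) Let V = {u, v} with u ≠ v and E = {(u,v), (v,u)}, and suppose all six edge costs c(s,u), c(s,v), c(u,t), c(v,t), c(u,v), c(v,u) are strictly positive. Then every minimum s–t cut of the augmented graph G' is one of the following four edge sets: {(u,t), (v,t)} (both users labelled 0), {(s,u), (s,v)} (both users labelled 1), {(u,t), (s,v), (u,v)} (u labelled 0, v labelled 1, with only the social link (u,v) cut), or {(s,u), (v,t), (v,u)} (u labelled 1, v labelled 0, with only the social link (v,u) cut). In particular, every minimum cut of the gadget cuts exactly one labelling link of each of the two users, and at most one of the two social links. -/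
/-!
Let `S` be the set of vertices reachable from `s` in `E' \ C`. Every edge of `E'` leaving `S` lies
in `C`, and the set of these edges is itself an s-t cut, since a path from `s` to `t` has to leave
`S`. When all costs are positive, no minimum cut strictly contains another cut, so a minimum cut
`C` is exactly the set of edges leaving `S` (`IsMinCut.eq_boundary`). For the gadget, `S` is
determined by which of `u`, `v` it contains, and the four possibilities give the four edge sets.
-/


open Finset

variable {α : Type*}

/-- `C` is a minimum s–t cut for the cost function `c`. -/
def IsMinCut [DecidableEq α] (V : Finset α) (s t : α) (E : Finset (α × α))
    (c : α × α → ℝ) (C : Finset (α × α)) : Prop :=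
  IsCut V s t E C ∧ ∀ C', IsCut V s t E C' → ∑ e ∈ C, c e ≤ ∑ e ∈ C', c e

/-- The edges of the augmented graph that leave the vertex set `{x | P x}`. -/
noncomputable def boundary [DecidableEq α] (V : Finset α) (s t : α) (E : Finset (α × α))
    (P : α → Prop) : Finset (α × α) :=
  open Classical in (augEdges V s t E).filter (fun e => P e.1 ∧ ¬ P e.2)

lemma isCut_boundary [DecidableEq α] (V : Finset α) (s t : α) (E : Finset (α × α))
    (P : α → Prop) (hs : P s) (ht : ¬ P t) : IsCut V s t E (boundary V s t E P) := by
  classical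
  refine ⟨Finset.filter_subset _ _, fun h => ht ?_⟩
  -- `P` propagates along every edge that is not in the boundary.
  have key : ∀ y, Reaches (augEdges V s t E \ boundary V s t E P) s y → P y := by
    intro y hy
    induction hy with
    | refl => exact hs
    | tail _ hbc ih =>
      by_contra hc
      simp only [boundary, Finset.mem_sdiff, Finset.mem_filter] at hbc
      exact hbc.2 ⟨hbc.1, ih, hc⟩
  exact key t h

/-- With positive costs, a minimum cut is the set of edges leaving the set of vertices that
remain reachable from `s` once the cut is removed. -/
lemma IsMinCut.eq_boundary [DecidableEq α] {V : Finset α} {s t : α} {E : Finset (α × α)}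
    {c : α × α → ℝ} {C : Finset (α × α)} (hC : IsMinCut V s t E c C)
    (hc : ∀ e ∈ augEdges V s t E, 0 < c e) :
    C = boundary V s t E (Reaches (augEdges V s t E \ C) s) := by
  have hsub : boundary V s t E (Reaches (augEdges V s t E \ C) s) ⊆ C := by
    rintro ⟨a, b⟩ he
    simp only [boundary, Finset.mem_filter] at he
    by_contra hn
    exact he.2.2 (he.2.1.tail (Finset.mem_sdiff.2 ⟨he.1, hn⟩))
  have hle := hC.2 _ (isCut_boundary V s t E (Reaches (augEdges V s t E \ C) s)
    Relation.ReflTransGen.refl hC.1.2)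
  by_contra hne
  obtain ⟨e, heC, he⟩ := Finset.exists_of_ssubset (hsub.ssubset_of_ne (Ne.symm hne))
  exact absurd hle (not_le.2 (Finset.sum_lt_sum_of_subset hsub heC he (hc e (hC.1.1 heC))
    fun j hj _ => (hc j (hC.1.1 hj)).le))

/-- Two-user gadget (Figure 3 of the paper): with `V = {u,v}`, `E = {(u,v),(v,u)}` and all
six edge costs strictly positive, every minimum s–t cut of the augmented graph is one of
four edge sets: both users labelled `0`, both labelled `1`, or one of the two mixed
labellings, each cutting exactly one labelling link per user and at most one social link. -/
theorem two_user_gadget_minCut_cases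
    [DecidableEq α] (s t u v : α)
    (huv : u ≠ v) (hst : s ≠ t)
    (hs : s ∉ ({u, v} : Finset α)) (ht : t ∉ ({u, v} : Finset α))
    (c : α × α → ℝ)
    (hcsu : 0 < c (s, u)) (hcsv : 0 < c (s, v))
    (hcut : 0 < c (u, t)) (hcvt : 0 < c (v, t))
    (hcuv : 0 < c (u, v)) (hcvu : 0 < c (v, u))
    (C : Finset (α × α))
    (hC : IsMinCut ({u, v} : Finset α) s t ({(u, v), (v, u)} : Finset (α × α)) c C) :
    C = ({(u, t), (v, t)} : Finset (α × α)) ∨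
      C = ({(s, u), (s, v)} : Finset (α × α)) ∨
      C = ({(u, t), (s, v), (u, v)} : Finset (α × α)) ∨
      C = ({(s, u), (v, t), (v, u)} : Finset (α × α)) := by
  have hpos : ∀ e ∈ augEdges ({u, v} : Finset α) s t {(u, v), (v, u)}, 0 < c e := by
    intro e he
    simp only [augEdges, Finset.mem_union, Finset.mem_image, Finset.mem_insert,
      Finset.mem_singleton] at he
    rcases he with ((rfl | rfl) | ⟨a, rfl | rfl, rfl⟩) | ⟨a, rfl | rfl, rfl⟩ <;> assumption
  have hEq := hC.eq_boundary hpos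
  have hPs : Reaches (augEdges ({u, v} : Finset α) s t {(u, v), (v, u)} \ C) s s :=
    Relation.ReflTransGen.refl
  have hPt := hC.1.2
  -- Only the values of the reachability predicate at `s`, `t`, `u`, `v` matter from here on.
  generalize Reaches (augEdges ({u, v} : Finset α) s t {(u, v), (v, u)} \ C) s = P
    at hEq hPs hPt
  rw [hEq]
  by_cases hu : P u <;> by_cases hv : P v
  · left
    ext e
    simp only [boundary, augEdges, Finset.mem_filter, Finset.mem_union, Finset.mem_image,
      Finset.mem_insert, Finset.mem_singleton]
    grind
  · right; right; left
    ext e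
    simp only [boundary, augEdges, Finset.mem_filter, Finset.mem_union, Finset.mem_image,
      Finset.mem_insert, Finset.mem_singleton]
    grind
  · right; right; right
    ext e
    simp only [boundary, augEdges, Finset.mem_filter, Finset.mem_union, Finset.mem_image,
      Finset.mem_insert, Finset.mem_singleton]
    grind
  · right; left
    ext e
    simp only [boundary, augEdges, Finset.mem_filter, Finset.mem_union, Finset.mem_image,
      Finset.mem_insert, Finset.mem_singleton]
    grind
end
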